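/- Let u : A → B be a morphism of noetherian rings, M a finitely generated A-module, N a finitely generated B-module which is flat as an A-module, and n a natural number. Consider M ⊗_A N as a B-module. If M satisfies the condition (C_n) and for every P ∈ Supp(M) the fiber module N_P/PN_P satisfies Serre's condition (S_n) as a module over B_P/PB_P, then M ⊗_A N satisfies the condition (C_n) as a B-module. -/

import Mathlib

noncomputable section

open TensorProduct

universe u v w

/-- The depth of the ideal `I` on the module `M`: the supremum of lengths of
`M`-regular sequences with entries in `I`. -/
noncomputable def idealDepth (A : Type u) [CommRing A] (I : Ideal A)
    (M : Type v) [AddCommGroup M] [Module A M] : ℕ∞ :=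
  sSup {n : ℕ∞ | ∃ rs : List A, (rs.length : ℕ∞) = n ∧ (∀ r ∈ rs, r ∈ I) ∧
    RingTheory.Sequence.IsRegular M rs}

/-- The depth of a module over a local ring. -/
noncomputable def localDepth (A : Type u) [CommRing A] [IsLocalRing A]
    (M : Type v) [AddCommGroup M] [Module A M] : ℕ∞ :=
  idealDepth A (IsLocalRing.maximalIdeal A) M

/-- The (Krull) dimension of a module, i.e. the Krull dimension of its support. -/
noncomputable def supportDim (A : Type u) [CommRing A]
    (M : Type v) [AddCommGroup M] [Module A M] : WithBot ℕ∞ :=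
  Order.krullDim (Module.support A M)

/-- `depth (M_P)` : the depth of the localization of `M` at a prime `P`,
over the local ring `A_P`. -/
noncomputable def depthAt (A : Type u) [CommRing A]
    (M : Type v) [AddCommGroup M] [Module A M] (P : PrimeSpectrum A) : ℕ∞ :=
  localDepth (Localization.AtPrime P.asIdeal) (LocalizedModule P.asIdeal.primeCompl M)

/-- `ht_M(P) = dim (M_P)` : the height of a prime `P` in the support of `M`,
i.e. the dimension of the localized module `M_P` over `A_P`. -/
noncomputable def heightAt (A : Type u) [CommRing A]
    (M : Type v) [AddCommGroup M] [Module A M] (P : PrimeSpectrum A) : WithBot ℕ∞ :=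
  supportDim (Localization.AtPrime P.asIdeal) (LocalizedModule P.asIdeal.primeCompl M)

/-- Serre's condition `(S_n)` for a module: for every `P` in the support,
`depth (M_P) ≥ min (n, ht_M(P))`. -/
def SerreCondS (A : Type u) [CommRing A] (n : ℕ)
    (M : Type v) [AddCommGroup M] [Module A M] : Prop :=
  ∀ P ∈ Module.support A M,
    min (n : WithBot ℕ∞) (heightAt A M P) ≤ (depthAt A M P : WithBot ℕ∞)

/-- The condition `(C_n)` for a module: for every `P` in the support,
`depth (M_P) ≥ min (n, ht_M(P)) - 1`, equivalently
`min (n, ht_M(P)) ≤ depth (M_P) + 1`. -/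
def CondC (A : Type u) [CommRing A] (n : ℕ)
    (M : Type v) [AddCommGroup M] [Module A M] : Prop :=
  ∀ P ∈ Module.support A M,
    min (n : WithBot ℕ∞) (heightAt A M P) ≤ (depthAt A M P : WithBot ℕ∞) + 1

/-- A module `M` is almost Cohen-Macaulay if `depth(P, M) = depth (M_P)` for every
`P` in the support of `M` (Kang's definition). -/
def IsAlmostCMModule (A : Type u) [CommRing A]
    (M : Type v) [AddCommGroup M] [Module A M] : Prop :=
  ∀ P ∈ Module.support A M, idealDepth A P.asIdeal M = depthAt A M P

/-- A module `M` is Cohen-Macaulay if `depth (M_P) = dim (M_P)` for every `P` in its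
support. -/
def IsCMModule (A : Type u) [CommRing A]
    (M : Type v) [AddCommGroup M] [Module A M] : Prop :=
  ∀ P ∈ Module.support A M, (depthAt A M P : WithBot ℕ∞) = heightAt A M P

/-- A ring is almost Cohen-Macaulay if it is an almost Cohen-Macaulay module over
itself. -/
abbrev IsAlmostCMRing (A : Type u) [CommRing A] : Prop := IsAlmostCMModule A A

/-- A ring is Cohen-Macaulay if it is a Cohen-Macaulay module over itself, i.e. all its
localizations at primes have depth equal to dimension. -/
abbrev IsCMRing (A : Type u) [CommRing A] : Prop := IsCMModule A A

/-- A ring satisfies `(C_n)` if it does so as a module over itself. -/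
abbrev RingCondC (A : Type u) [CommRing A] (n : ℕ) : Prop := CondC A n A

/-- A ring satisfies `(S_n)` if it does so as a module over itself. -/
abbrev RingSerreCondS (A : Type u) [CommRing A] (n : ℕ) : Prop := SerreCondS A n A

variable (A : Type u) [CommRing A] (B : Type u) [CommRing B] [Algebra A B]

/-- The image in `B` of the complement of a prime `P` of `A`, as a submonoid of `B`. -/
noncomputable def fiberSubmonoid (P : PrimeSpectrum A) : Submonoid B :=
  Submonoid.map (algebraMap A B) P.asIdeal.primeCompl

/-- `PB_P` : the extension of the prime `P` of `A` to the localization `B_P` of `B`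
at (the image of) the complement of `P`. -/
noncomputable def fiberIdeal (P : PrimeSpectrum A) :
    Ideal (Localization (fiberSubmonoid A B P)) :=
  Ideal.map ((algebraMap B (Localization (fiberSubmonoid A B P))).comp (algebraMap A B))
    P.asIdeal

/-- The fiber ring `B_P / P B_P` of `A → B` at a prime `P` of `A`. -/
noncomputable def fiberRing (P : PrimeSpectrum A) : Type u :=
  Localization (fiberSubmonoid A B P) ⧸ fiberIdeal A B P

noncomputable instance (P : PrimeSpectrum A) : CommRing (fiberRing A B P) :=
  inferInstanceAs (CommRing (Localization (fiberSubmonoid A B P) ⧸ fiberIdeal A B P))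

/-- The fiber module `N_P / P N_P` of a `B`-module `N` at a prime `P` of `A`. -/
noncomputable def fiberModule (P : PrimeSpectrum A)
    (N : Type u) [AddCommGroup N] [Module B N] : Type u :=
  LocalizedModule (fiberSubmonoid A B P) N ⧸
    (fiberIdeal A B P •
      (⊤ : Submodule (Localization (fiberSubmonoid A B P))
        (LocalizedModule (fiberSubmonoid A B P) N)))

noncomputable instance (P : PrimeSpectrum A) (N : Type u) [AddCommGroup N] [Module B N] :
    AddCommGroup (fiberModule A B P N) :=
  inferInstanceAs (AddCommGroup (LocalizedModule (fiberSubmonoid A B P) N ⧸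
    (fiberIdeal A B P •
      (⊤ : Submodule (Localization (fiberSubmonoid A B P))
        (LocalizedModule (fiberSubmonoid A B P) N)))))

/-- `N_P / P N_P` is a module over the fiber ring `B_P / P B_P`. -/
noncomputable instance (P : PrimeSpectrum A) (N : Type u) [AddCommGroup N] [Module B N] :
    Module (fiberRing A B P) (fiberModule A B P N) :=
  inferInstanceAs (Module (Localization (fiberSubmonoid A B P) ⧸ fiberIdeal A B P)
    (LocalizedModule (fiberSubmonoid A B P) N ⧸
      (fiberIdeal A B P •
        (⊤ : Submodule (Localization (fiberSubmonoid A B P))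
          (LocalizedModule (fiberSubmonoid A B P) N)))))

/-- The canonical `B`-module structure on `M ⊗[A] N`, where `N` is a `B`-module,
given by `b • (m ⊗ n) = m ⊗ (b • n)`. -/
noncomputable instance tensorRightModule (A : Type u) [CommRing A] (B : Type u) [CommRing B]
    [Algebra A B] (M : Type u) [AddCommGroup M] [Module A M]
    (N : Type u) [AddCommGroup N] [Module A N] [Module B N] [IsScalarTower A B N] :
    Module B (M ⊗[A] N) where
  smul b x := (TensorProduct.comm A M N).symm (b • TensorProduct.comm A M N x)
  one_smul x := by
    show (TensorProduct.comm A M N).symm ((1 : B) • TensorProduct.comm A M N x) = x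
    simp
  mul_smul a b x := by
    show (TensorProduct.comm A M N).symm ((a * b) • TensorProduct.comm A M N x) =
      (TensorProduct.comm A M N).symm (a • TensorProduct.comm A M N
        ((TensorProduct.comm A M N).symm (b • TensorProduct.comm A M N x)))
    simp [mul_smul]
  smul_zero b := by
    show (TensorProduct.comm A M N).symm (b • TensorProduct.comm A M N 0) = 0
    simp
  smul_add b x y := by
    show (TensorProduct.comm A M N).symm (b • TensorProduct.comm A M N (x + y)) =
      (TensorProduct.comm A M N).symm (b • TensorProduct.comm A M N x) +
      (TensorProduct.comm A M N).symm (b • TensorProduct.comm A M N y)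
    simp
  add_smul a b x := by
    show (TensorProduct.comm A M N).symm ((a + b) • TensorProduct.comm A M N x) =
      (TensorProduct.comm A M N).symm (a • TensorProduct.comm A M N x) +
      (TensorProduct.comm A M N).symm (b • TensorProduct.comm A M N x)
    simp [add_smul]
  zero_smul x := by
    show (TensorProduct.comm A M N).symm ((0 : B) • TensorProduct.comm A M N x) = 0
    simp
/-!
Let `Q` be a prime of `B` over `P`. The ring map `A_P → B_Q` is local and `N_Q` is flat over `A_P`.
Writing `k(P)` for the residue field of `A_P`, one has

* `dim (N ⊗ M)_Q ≤ dim M_P + dim (N_Q ⊗ k(P))`, by the dimension inequality for local maps, and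
* `depth (N ⊗ M)_Q ≥ depth M_P + depth (N_Q ⊗ k(P))`.

For the depth, an `M_P`-regular sequence stays regular on `N_Q ⊗ M_P` by flatness, and it can be
followed by any `N_Q ⊗ k(P)`-regular sequence, because such a sequence is regular on `N_Q ⊗ L` for
every finitely generated `L`. To see the latter for a single element, pass from `L = k(P)` to
every `L` killed by a power of the maximal ideal by flatness, and from there to the general case
by Krull's intersection theorem; the quotient of `N_Q` by the element is again flat. Finally
`N_Q ⊗ k(P)` is the localization of the fiber module `N_P / P N_P` at the prime of the fiber ring
over `Q`, so `(C_n)` for `M` and `(S_n)` for the fiber add up to `(C_n)` for `N ⊗ M`.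
-/

section

-- Otherwise instance search would look for the `S`-action on `N ⊗[R] M` through
-- `tensorRightModule`, that is, in the factor `M`.
attribute [local instance] TensorProduct.leftModule

section TensorQuotients

variable {R S : Type*} [CommRing R] [CommRing S] [Algebra R S]
  (N : Type*) [AddCommGroup N] [Module R N] [Module S N] [IsScalarTower R S N]
  (M : Type*) [AddCommGroup M] [Module R M]

/-- The canonical isomorphism `(N ⊗ M) / y(N ⊗ M) ≃ N/yN ⊗ M`, for `y` acting on `N`. -/
def quotSMulTopTensorEquiv (y : S) :
    QuotSMulTop y (N ⊗[R] M) ≃ₗ[S] QuotSMulTop y N ⊗[R] M :=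
  QuotSMulTop.equivQuotTensor y (N ⊗[R] M) ≪≫ₗ
    (AlgebraTensorModule.assoc R S S _ N M).symm ≪≫ₗ
    AlgebraTensorModule.congr (QuotSMulTop.equivQuotTensor y N).symm (.refl R M)

/-- The canonical isomorphism `N ⊗ R/I ≃ N / (IS)N`. -/
def tensorQuotIdealEquiv (I : Ideal R) :
    N ⊗[R] (R ⧸ I) ≃ₗ[S] N ⧸ (I.map (algebraMap R S) • ⊤ : Submodule S N) :=
  (AlgebraTensorModule.cancelBaseChange R S S N (R ⧸ I)).symm ≪≫ₗ
    AlgebraTensorModule.congr (.refl S N)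
      (Algebra.TensorProduct.quotIdealMapEquivTensorQuot S I).symm.toLinearEquiv ≪≫ₗ
    tensorQuotEquivQuotSMul N _

lemma tensorQuotIdealEquiv_tmul_one (I : Ideal R) (x : N) :
    tensorQuotIdealEquiv (S := S) N I (x ⊗ₜ 1) = Submodule.Quotient.mk x := by
  rw [← LinearEquiv.eq_symm_apply]
  simp [tensorQuotIdealEquiv, tensorQuotEquivQuotSMul_symm_mk, Algebra.TensorProduct.one_def]

/-- The canonical isomorphism `N ⊗ M/IM ≃ (N ⊗ M) / (IS)(N ⊗ M)`. -/
def tensorQuotSMulTopEquiv (I : Ideal R) :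
    N ⊗[R] (M ⧸ (I • ⊤ : Submodule R M)) ≃ₗ[S]
      (N ⊗[R] M) ⧸ (I.map (algebraMap R S) • ⊤ : Submodule S (N ⊗[R] M)) :=
  AlgebraTensorModule.congr (.refl S N) (tensorQuotEquivQuotSMul M I).symm ≪≫ₗ
    (AlgebraTensorModule.assoc R R S N M (R ⧸ I)).symm ≪≫ₗ
    tensorQuotIdealEquiv (N ⊗[R] M) I

variable {N M}

lemma rTensor_lsmul_apply (y : S) (z : N ⊗[R] M) :
    ((LinearMap.lsmul S N y).restrictScalars R).rTensor M z = y • z := by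
  induction z with
  | zero => simp
  | tmul a b => simp [smul_tmul']
  | add a b ha hb => simp only [map_add, smul_add, ha, hb]

lemma tensorQuotSMulTopEquiv_lTensor_mkQ (I : Ideal R) (z : N ⊗[R] M) :
    tensorQuotSMulTopEquiv (S := S) N M I
        (AlgebraTensorModule.lTensor S N (I • ⊤ : Submodule R M).mkQ z) =
      Submodule.Quotient.mk z := by
  induction z with
  | zero => simp
  | tmul a b => simp [tensorQuotSMulTopEquiv, tensorQuotIdealEquiv_tmul_one]
  | add a b ha hb => simp only [map_add, Submodule.Quotient.mk_add, ha, hb]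

lemma mem_map_smul_top_of_lTensor_mkQ_eq_zero {I : Ideal R} {z : N ⊗[R] M}
    (hz : AlgebraTensorModule.lTensor S N (I • ⊤ : Submodule R M).mkQ z = 0) :
    z ∈ (I.map (algebraMap R S) • ⊤ : Submodule S (N ⊗[R] M)) := by
  rw [← Submodule.Quotient.mk_eq_zero, ← tensorQuotSMulTopEquiv_lTensor_mkQ, hz, map_zero]

end TensorQuotients

section LocalCriterion

open RingTheory.Sequence
open scoped Pointwise

variable {R S : Type*} [CommRing R] [CommRing S] [Algebra R S]
  {N : Type*} [AddCommGroup N] [Module R N] [Module S N] [IsScalarTower R S N]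
  {M : Type*} [AddCommGroup M] [Module R M]

variable (R S N M) in
lemma finite_tensor [Module.Finite S N] [Module.Finite R M] : Module.Finite S (N ⊗[R] M) :=
  .equiv (AlgebraTensorModule.cancelBaseChange R S S N M)

lemma isSMulRegular_tensor_of_exact [Module.Flat R N] {M₁ M₃ : Type*} [AddCommGroup M₁]
    [Module R M₁] [AddCommGroup M₃] [Module R M₃] {f : M₁ →ₗ[R] M} {g : M →ₗ[R] M₃}
    (hf : Function.Injective f) (hfg : Function.Exact f g) {y : S}
    (h₁ : IsSMulRegular (N ⊗[R] M₁) y) (h₃ : IsSMulRegular (N ⊗[R] M₃) y) :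
    IsSMulRegular (N ⊗[R] M) y :=
  isSMulRegular_of_range_eq_ker (f := AlgebraTensorModule.lTensor S N f)
    (g := AlgebraTensorModule.lTensor S N g)
    (Module.Flat.lTensor_preserves_injective_linearMap f hf)
    (by ext z; exact (Module.Flat.lTensor_exact N hfg z).symm) h₁ h₃

variable {m : Ideal R} [m.IsMaximal] {y : S}

lemma isSMulRegular_tensor_of_isTorsionBySet (hy : IsSMulRegular (N ⊗[R] (R ⧸ m)) y)
    (hM : Module.IsTorsionBySet R M m) : IsSMulRegular (N ⊗[R] M) y := by
  classical
  let : Field (R ⧸ m) := Ideal.Quotient.field m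
  let := hM.module
  let b := Module.Basis.ofVectorSpace (R ⧸ m) M
  let e := AlgebraTensorModule.congr (.refl S N) (b.repr.restrictScalars R) ≪≫ₗ
    finsuppRight R S N (R ⧸ m) _
  rw [e.isSMulRegular_congr]
  intro u v h
  ext i
  exact hy (DFunLike.congr_fun h i)

lemma isSMulRegular_tensor_of_isTorsionBySet_pow [Module.Flat R N]
    (hy : IsSMulRegular (N ⊗[R] (R ⧸ m)) y) (k : ℕ)
    (hM : Module.IsTorsionBySet R M ↑(m ^ k)) : IsSMulRegular (N ⊗[R] M) y := by
  induction k generalizing M with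
  | zero =>
    have : Subsingleton M := subsingleton_of_forall_eq 0 fun x ↦ by
      simpa using @hM x ⟨1, by simp⟩
    exact fun _ _ _ ↦ Subsingleton.elim _ _
  | succ k ih =>
    let L : Submodule R M := m • ⊤
    refine isSMulRegular_tensor_of_exact L.injective_subtype (LinearMap.exact_subtype_mkQ L)
      (ih ?_) (isSMulRegular_tensor_of_isTorsionBySet hy
        (Module.isTorsionBySet_quotient_ideal_smul M m))
    rintro ⟨x, hx⟩ ⟨r, hr⟩
    suffices r • x = 0 from Subtype.ext this
    refine Submodule.smul_induction_on hx (fun s hs x _ ↦ ?_) fun u v hu hv ↦ ?_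
    · simpa [← mul_smul] using @hM x ⟨r * s, Ideal.mul_mem_mul hr hs⟩
    · rw [smul_add, hu, hv, add_zero]

lemma isSMulRegular_tensor_of_flat [IsNoetherianRing S] [Module.Finite S N] [Module.Flat R N]
    [Module.Finite R M] (hm : m.map (algebraMap R S) ≤ Ideal.jacobson ⊥)
    (hy : IsSMulRegular (N ⊗[R] (R ⧸ m)) y) : IsSMulRegular (N ⊗[R] M) y := by
  have := finite_tensor R S N M
  refine .of_right_eq_zero_of_smul fun z hz ↦ ?_
  suffices ∀ k : ℕ, z ∈ (m.map (algebraMap R S) ^ k • ⊤ : Submodule S (N ⊗[R] M)) by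
    simpa [← Submodule.mem_iInf, Ideal.iInf_pow_smul_eq_bot_of_le_jacobson _ hm] using this
  intro k
  let L : Submodule R M := m ^ k • ⊤
  have hreg : IsSMulRegular (N ⊗[R] (M ⧸ L)) y :=
    isSMulRegular_tensor_of_isTorsionBySet_pow hy k (Module.isTorsionBySet_quotient_ideal_smul M _)
  have hzL : AlgebraTensorModule.lTensor S N L.mkQ z = 0 :=
    hreg.right_eq_zero_of_smul (by rw [← map_smul, hz, map_zero])
  rw [← Ideal.map_pow]
  exact mem_map_smul_top_of_lTensor_mkQ_eq_zero hzL

lemma flat_of_exact_lsmul [IsNoetherianRing S] [Module.Finite S N] [Module.Flat R N]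
    (hm : m.map (algebraMap R S) ≤ Ideal.jacobson ⊥) (hy : IsSMulRegular (N ⊗[R] (R ⧸ m)) y)
    {Q : Type*} [AddCommGroup Q] [Module R Q] [Module S Q] [IsScalarTower R S Q] {g : N →ₗ[S] Q}
    (hyg : Function.Exact (LinearMap.lsmul S N y) g) (hg : Function.Surjective g) :
    Module.Flat R Q := by
  rw [Module.Flat.iff_lTensor_injective']
  intro I
  refine lTensor_injective_of_exact_of_exact_of_rTensor_injective
    (f₁ := (LinearMap.lsmul S N y).restrictScalars R) (f₂ := g.restrictScalars R) hyg hg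
    (LinearMap.exact_subtype_mkQ I) I.mkQ_surjective ?_
    (Module.Flat.lTensor_preserves_injective_linearMap _ I.injective_subtype)
  intro u v h
  rw [rTensor_lsmul_apply, rTensor_lsmul_apply] at h
  exact isSMulRegular_tensor_of_flat hm hy h

lemma flat_quotSMulTop [IsNoetherianRing S] [Module.Finite S N] [Module.Flat R N]
    (hm : m.map (algebraMap R S) ≤ Ideal.jacobson ⊥) (hy : IsSMulRegular (N ⊗[R] (R ⧸ m)) y) :
    Module.Flat R (QuotSMulTop y N) := by
  refine flat_of_exact_lsmul hm hy (g := (y • (⊤ : Submodule S N)).mkQ) (fun x ↦ ?_)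
    (Submodule.mkQ_surjective _)
  simp [Submodule.mem_smul_pointwise_iff_exists]

lemma isWeaklyRegular_tensor_of_fiber [IsNoetherianRing S] [Module.Finite S N] [Module.Flat R N]
    [Module.Finite R M] (hm : m.map (algebraMap R S) ≤ Ideal.jacobson ⊥) {ys : List S}
    (hys : IsWeaklyRegular (N ⊗[R] (R ⧸ m)) ys) : IsWeaklyRegular (N ⊗[R] M) ys := by
  induction ys generalizing N with
  | nil => simp
  | cons y ys ih =>
    rw [isWeaklyRegular_cons_iff] at hys ⊢
    have := flat_quotSMulTop hm hys.1
    refine ⟨isSMulRegular_tensor_of_flat hm hys.1, ?_⟩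
    rw [(quotSMulTopTensorEquiv N M y).isWeaklyRegular_congr]
    exact ih (((quotSMulTopTensorEquiv N _ y).isWeaklyRegular_congr _).mp hys.2)

lemma isWeaklyRegular_tensor_append [IsNoetherianRing S] [Module.Finite S N] [Module.Flat R N]
    [Module.Finite R M] (hm : m.map (algebraMap R S) ≤ Ideal.jacobson ⊥) {xs : List R}
    (hxs : IsWeaklyRegular M xs) {ys : List S} (hys : IsWeaklyRegular (N ⊗[R] (R ⧸ m)) ys) :
    IsWeaklyRegular (N ⊗[R] M) (xs.map (algebraMap R S) ++ ys) := by
  rw [isWeaklyRegular_append_iff, isWeaklyRegular_map_algebraMap_iff, ← Ideal.map_ofList,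
    ← (tensorQuotSMulTopEquiv N M (Ideal.ofList xs)).isWeaklyRegular_congr]
  exact ⟨hxs.isWeaklyRegular_lTensor, isWeaklyRegular_tensor_of_fiber hm hys⟩

end LocalCriterion

section LocalDepth

open IsLocalRing RingTheory.Sequence

lemma localDepth_congr {R M M' : Type*} [CommRing R] [IsLocalRing R] [AddCommGroup M]
    [Module R M] [AddCommGroup M'] [Module R M'] (e : M ≃ₗ[R] M') :
    localDepth R M = localDepth R M' := by
  simp only [localDepth, idealDepth, e.isRegular_congr]

variable {R M : Type*} [CommRing R] [IsLocalRing R] [AddCommGroup M] [Module R M]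
  [Module.Finite R M] [Nontrivial M]

lemma length_le_localDepth {rs : List R} (hrs : ∀ r ∈ rs, r ∈ maximalIdeal R)
    (hreg : IsWeaklyRegular M rs) : (rs.length : ℕ∞) ≤ localDepth R M :=
  le_sSup ⟨rs, rfl, hrs, .of_isWeaklyRegular_of_mem_maximalIdeal _ hrs hreg⟩

variable (R M) in
lemma localDepth_eq_iSup : localDepth R M =
    ⨆ (rs : List R) (_ : (∀ r ∈ rs, r ∈ maximalIdeal R) ∧ IsWeaklyRegular M rs),
      (rs.length : ℕ∞) := by
  refine le_antisymm (sSup_le ?_) (iSup₂_le fun rs h ↦ length_le_localDepth h.1 h.2)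
  rintro _ ⟨rs, rfl, hrs, hreg⟩
  exact le_iSup₂_of_le rs ⟨hrs, hreg.toIsWeaklyRegular⟩ le_rfl

end LocalDepth

section SurjectiveBaseChange

open IsLocalRing RingTheory.Sequence

variable {S T K : Type*} [CommRing S] [CommRing T] [Algebra S T]
  [AddCommGroup K] [Module S K] [Module T K] [IsScalarTower S T K]

lemma supportDim_eq_of_surjective (hST : Function.Surjective (algebraMap S T))
    [Module.Finite S K] : supportDim S K = supportDim T K := by
  have : Module.Finite T K := .of_restrictScalars_finite S T K
  let f := (Ideal.Quotient.mk (Module.annihilator T K)).comp (algebraMap S T)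
  have hf : Function.Surjective f := Ideal.Quotient.mk_surjective.comp hST
  have hker : RingHom.ker f = Module.annihilator S K := by
    ext s
    rw [RingHom.mem_ker, RingHom.comp_apply, Ideal.Quotient.eq_zero_iff_mem]
    simp [Module.mem_annihilator]
  calc supportDim S K = ringKrullDim (S ⧸ Module.annihilator S K) :=
        Module.supportDim_eq_ringKrullDim_quotient_annihilator S K
    _ = ringKrullDim (T ⧸ Module.annihilator T K) := by
        rw [← hker]
        exact ringKrullDim_eq_of_ringEquiv (RingHom.quotientKerEquivOfSurjective hf)
    _ = supportDim T K := (Module.supportDim_eq_ringKrullDim_quotient_annihilator T K).symm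

lemma localDepth_eq_of_surjective [IsLocalRing S] [IsLocalRing T]
    (hST : Function.Surjective (algebraMap S T)) : localDepth S K = localDepth T K := by
  have : IsLocalHom (algebraMap S T) := .of_surjective _ hST
  have hmem (rs : List S) : (∀ r ∈ rs.map (algebraMap S T), r ∈ maximalIdeal T) ↔
      ∀ r ∈ rs, r ∈ maximalIdeal S := by
    simp
  have hreg (rs : List S) : IsRegular K (rs.map (algebraMap S T)) ↔ IsRegular K rs :=
    (AddEquiv.refl K).isRegular_congr <| List.forall₂_map_left_iff.mpr <|
      List.forall₂_same.mpr fun r _ ↦ algebraMap_smul T r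
  simp only [localDepth, idealDepth, (List.map_surjective_iff.mpr hST).exists, List.length_map,
    hmem, hreg]

end SurjectiveBaseChange

section Annihilator

variable {R S : Type*} [CommRing R] [CommRing S] [Algebra R S]
  {N : Type*} [AddCommGroup N] [Module R N] [Module S N] [IsScalarTower R S N]
  {M : Type*} [AddCommGroup M] [Module R M]

lemma annihilator_le_annihilator_tensor :
    Module.annihilator S N ≤ Module.annihilator S (N ⊗[R] M) := fun s hs ↦ by
  rw [Module.mem_annihilator] at hs ⊢
  intro z
  induction z with
  | zero => simp
  | tmul x m => rw [smul_tmul', hs, zero_tmul]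
  | add u v hu hv => rw [smul_add, hu, hv, add_zero]

lemma annihilator_le_comap_annihilator_tensor :
    Module.annihilator R M ≤ (Module.annihilator S (N ⊗[R] M)).comap (algebraMap R S) := by
  intro r hr
  rw [Ideal.mem_comap, Module.mem_annihilator]
  rw [Module.mem_annihilator] at hr
  intro z
  induction z with
  | zero => simp
  | tmul x m => rw [algebraMap_smul, ← tmul_smul, hr, tmul_zero]
  | add u v hu hv => rw [smul_add, hu, hv, add_zero]

end Annihilator

section RingKrullDim

open IsLocalRing

lemma ringKrullDim_quotient_sup_le_supportDim {S N : Type*} [CommRing S] [AddCommGroup N]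
    [Module S N] [Module.Finite S N] {J K : Ideal S} (hJ : Module.annihilator S N ≤ J) :
    ringKrullDim (S ⧸ J ⊔ K) ≤ supportDim S (N ⧸ (K • ⊤ : Submodule S N)) := by
  have hsub : Module.support S (S ⧸ J ⊔ K) ⊆
      Module.support S (N ⧸ (K • ⊤ : Submodule S N)) := by
    rw [Module.support_quotient, Module.support_eq_zeroLocus, Module.support_eq_zeroLocus,
      Ideal.annihilator_quotient, PrimeSpectrum.zeroLocus_sup]
    exact Set.inter_subset_inter_left _ (PrimeSpectrum.zeroLocus_anti_mono hJ)
  rw [← Module.supportDim_quotient_eq_ringKrullDim]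
  exact Order.krullDim_le_of_strictMono (Set.inclusion hsub) fun _ _ h ↦ h

variable {R S : Type*} [CommRing R] [CommRing S] [Algebra R S] [IsLocalRing R]
  [IsLocalRing S] [IsLocalHom (algebraMap R S)] [IsNoetherianRing R] [IsNoetherianRing S]

lemma ringKrullDim_le_add_ringKrullDim_quotient_map_maximalIdeal : ringKrullDim S ≤
      ringKrullDim R + ringKrullDim (S ⧸ (maximalIdeal R).map (algebraMap R S)) := by
  set L := (maximalIdeal R).map (algebraMap R S)
  have : (maximalIdeal S).LiesOver (maximalIdeal R) := ⟨(maximalIdeal_comap (algebraMap R S)).symm⟩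
  have : ((maximalIdeal S).map (Ideal.Quotient.mk L)).IsPrime :=
    Ideal.map_isPrime_of_surjective Ideal.Quotient.mk_surjective
      (by rw [Ideal.mk_ker]; exact map_maximalIdeal_le _)
  calc ringKrullDim S = (maximalIdeal S).height := maximalIdeal_height_eq_ringKrullDim.symm
    _ ≤ (maximalIdeal R).height +
          (((maximalIdeal S).map (Ideal.Quotient.mk L)).height : WithBot ℕ∞) := by
        exact_mod_cast Ideal.height_le_height_add_of_liesOver (maximalIdeal R) (maximalIdeal S)
    _ ≤ ringKrullDim R + ringKrullDim (S ⧸ L) :=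
        add_le_add maximalIdeal_height_eq_ringKrullDim.le Ideal.height_le_ringKrullDim_of_isPrime

lemma ringKrullDim_quotient_le_add {I : Ideal R} {J : Ideal S}
    (hIJ : I ≤ J.comap (algebraMap R S)) (hJ : J ≠ ⊤) :
    ringKrullDim (S ⧸ J) ≤ ringKrullDim (R ⧸ I) +
      ringKrullDim (S ⧸ J ⊔ (maximalIdeal R).map (algebraMap R S)) := by
  have hI : I ≠ ⊤ := fun h ↦ hJ <| (Ideal.eq_top_iff_one J).mpr <| by
    simpa using hIJ (h ▸ Submodule.mem_top : (1 : R) ∈ I)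
  have := Ideal.Quotient.nontrivial_iff.mpr hI
  have := Ideal.Quotient.nontrivial_iff.mpr hJ
  have : IsLocalRing (R ⧸ I) := .of_surjective' _ Ideal.Quotient.mk_surjective
  have : IsLocalRing (S ⧸ J) := .of_surjective' _ Ideal.Quotient.mk_surjective
  have : IsLocalHom (Ideal.Quotient.mk I) := .of_surjective _ Ideal.Quotient.mk_surjective
  have : IsLocalHom (Ideal.Quotient.mk J) := .of_surjective _ Ideal.Quotient.mk_surjective
  let : Algebra (R ⧸ I) (S ⧸ J) := (Ideal.quotientMap J (algebraMap R S) hIJ).toAlgebra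
  have hcomp : (algebraMap (R ⧸ I) (S ⧸ J)).comp (Ideal.Quotient.mk I) =
      (Ideal.Quotient.mk J).comp (algebraMap R S) := rfl
  have : IsLocalHom (algebraMap (R ⧸ I) (S ⧸ J)) := by
    refine ⟨Ideal.Quotient.mk_surjective.forall.mpr fun r hr ↦ ?_⟩
    exact (isUnit_of_map_unit ((Ideal.Quotient.mk J).comp (algebraMap R S)) r hr).map _
  have hmap : (maximalIdeal (R ⧸ I)).map (algebraMap (R ⧸ I) (S ⧸ J)) =
      ((maximalIdeal R).map (algebraMap R S)).map (Ideal.Quotient.mk J) := by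
    rw [← map_maximalIdeal_of_surjective _ Ideal.Quotient.mk_surjective, Ideal.map_map, hcomp,
      Ideal.map_map]
  refine (ringKrullDim_le_add_ringKrullDim_quotient_map_maximalIdeal
    (R := R ⧸ I) (S := S ⧸ J)).trans_eq ?_
  rw [hmap, ringKrullDim_eq_of_ringEquiv (DoubleQuot.quotQuotEquivQuotSup _ _)]

end RingKrullDim

section LocalFlat

open IsLocalRing RingTheory.Sequence

/-- The closed fiber `N / 𝔪N` of an `S`-module `N`, where `S` is an algebra over the local ring `R`
and `𝔪` is the maximal ideal of `R`. -/
abbrev ClosedFiber (R S N : Type*) [CommRing R] [CommRing S] [Algebra R S] [IsLocalRing R]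
    [AddCommGroup N] [Module S N] : Type _ :=
  N ⧸ ((maximalIdeal R).map (algebraMap R S) • ⊤ : Submodule S N)

variable {R S : Type*} [CommRing R] [CommRing S] [Algebra R S] [IsLocalRing R] [IsLocalRing S]
  [IsLocalHom (algebraMap R S)] {N : Type*} [AddCommGroup N] [Module S N] [Module.Finite S N]

variable (R S N) in
lemma nontrivial_closedFiber [Nontrivial N] : Nontrivial (ClosedFiber R S N) := by
  refine Submodule.Quotient.nontrivial_iff.mpr fun h ↦ top_ne_bot (α := Submodule S N) ?_
  refine Submodule.eq_bot_of_le_smul_of_le_jacobson_bot _ ⊤ Module.Finite.fg_top h.ge ?_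
  exact (map_maximalIdeal_le _).trans (maximalIdeal_le_jacobson _)

variable [IsNoetherianRing S] [Module R N] [IsScalarTower R S N]
  {M : Type*} [AddCommGroup M] [Module R M] [Module.Finite R M]

lemma localDepth_add_localDepth_closedFiber_le_localDepth_tensor [Module.Flat R N]
    [Nontrivial (N ⊗[R] M)] :
    localDepth R M + localDepth S (ClosedFiber R S N) ≤ localDepth S (N ⊗[R] M) := by
  have := finite_tensor R S N M
  have : Nontrivial M := by
    by_contra! h
    exact not_subsingleton (N ⊗[R] M) inferInstance
  have : Nontrivial N := by
    by_contra! h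
    exact not_subsingleton (N ⊗[R] M) inferInstance
  have := nontrivial_closedFiber R S N
  rw [localDepth_eq_iSup R M, localDepth_eq_iSup S (ClosedFiber R S N)]
  refine ENat.biSup_add_biSup_le' ⟨[], by simp⟩ ⟨[], by simp⟩
    fun xs ⟨hxs, hxsreg⟩ ys ⟨hys, hysreg⟩ ↦ ?_
  rw [← (tensorQuotIdealEquiv N (maximalIdeal R)).isWeaklyRegular_congr] at hysreg
  refine le_of_eq_of_le ?_ (length_le_localDepth (rs := xs.map (algebraMap R S) ++ ys) ?_ ?_)
  · simp
  · simp only [List.mem_append, List.mem_map]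
    rintro _ (⟨x, hx, rfl⟩ | hy)
    · exact map_nonunit _ _ (hxs x hx)
    · exact hys _ hy
  · exact isWeaklyRegular_tensor_append ((map_maximalIdeal_le _).trans (maximalIdeal_le_jacobson _))
      hxsreg hysreg

lemma supportDim_tensor_le [IsNoetherianRing R] :
    supportDim S (N ⊗[R] M) ≤ supportDim R M + supportDim S (ClosedFiber R S N) := by
  have := finite_tensor R S N M
  cases subsingleton_or_nontrivial (N ⊗[R] M)
  · exact (Module.supportDim_eq_bot_of_subsingleton S (N ⊗[R] M)).trans_le bot_le
  have hJ : Module.annihilator S (N ⊗[R] M) ≠ ⊤ :=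
    Module.annihilator_eq_top_iff.not.mpr (not_subsingleton _)
  calc supportDim S (N ⊗[R] M) = ringKrullDim (S ⧸ Module.annihilator S (N ⊗[R] M)) :=
        Module.supportDim_eq_ringKrullDim_quotient_annihilator S _
    _ ≤ ringKrullDim (R ⧸ Module.annihilator R M) + ringKrullDim (S ⧸
          Module.annihilator S (N ⊗[R] M) ⊔ (maximalIdeal R).map (algebraMap R S)) :=
        ringKrullDim_quotient_le_add annihilator_le_comap_annihilator_tensor hJ
    _ ≤ _ := add_le_add (Module.supportDim_eq_ringKrullDim_quotient_annihilator R M).ge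
        (ringKrullDim_quotient_sup_le_supportDim annihilator_le_annihilator_tensor)

end LocalFlat

section QuotientTensor

variable {S T : Type*} [CommRing S] [CommRing T] [Algebra S T] {I : Ideal S}
  (hST : Function.Surjective (algebraMap S T)) (hI : RingHom.ker (algebraMap S T) = I)
  (K : Type*) [AddCommGroup K] [Module S K]

/-- If `S → T` is surjective with kernel `I`, then `T ⊗[S] K ≃ K ⧸ I K`. -/
def tensorEquivQuotientOfSurjective : T ⊗[S] K ≃ₗ[S] K ⧸ (I • ⊤ : Submodule S K) :=
  TensorProduct.congr ((Submodule.quotEquivOfEq _ _ hI.symm ≪≫ₗ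
      (Algebra.linearMap S T).quotKerEquivOfSurjective hST).symm) (.refl S K) ≪≫ₗ
    quotTensorEquivQuotSMul K I

include hST hI

lemma supportDim_tensor_eq_of_surjective [Module.Finite S K] :
    supportDim T (T ⊗[S] K) = supportDim S (K ⧸ (I • ⊤ : Submodule S K)) :=
  let e := tensorEquivQuotientOfSurjective hST hI K
  have : Module.Finite S (T ⊗[S] K) := .equiv e.symm
  (supportDim_eq_of_surjective hST).symm.trans (Module.supportDim_eq_of_equiv e)

lemma localDepth_tensor_eq_of_surjective [IsLocalRing S] [IsLocalRing T] :
    localDepth T (T ⊗[S] K) = localDepth S (K ⧸ (I • ⊤ : Submodule S K)) :=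
  (localDepth_eq_of_surjective hST).symm.trans
    (localDepth_congr (tensorEquivQuotientOfSurjective hST hI K))

lemma nontrivial_tensor_of_surjective [Nontrivial (K ⧸ (I • ⊤ : Submodule S K))] :
    Nontrivial (T ⊗[S] K) :=
  (tensorEquivQuotientOfSurjective hST hI K).toEquiv.nontrivial

end QuotientTensor

section Localization

/-- If `A → S` factors through `R`, the base change of `N ⊗[A] M` along `B → S` is the tensor
product over `R` of the base changes of `N` and `M`. -/
def tensorBaseChangeEquiv (A B R S N M : Type*) [CommRing A] [CommRing B] [CommRing R]
    [CommRing S] [Algebra A B] [Algebra A R] [Algebra A S] [Algebra B S] [Algebra R S]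
    [IsScalarTower A B S] [IsScalarTower A R S] [AddCommGroup N] [Module A N] [Module B N]
    [IsScalarTower A B N] [AddCommGroup M] [Module A M] :
    (S ⊗[B] N) ⊗[R] (R ⊗[A] M) ≃ₗ[S] S ⊗[B] (N ⊗[A] M) :=
  AlgebraTensorModule.cancelBaseChange A R S (S ⊗[B] N) M ≪≫ₗ
    AlgebraTensorModule.assoc A B S S N M

lemma flat_baseChange_of_flat (A B S N : Type*) [CommRing A] [CommRing B] [CommRing S]
    [Algebra A B] [Algebra A S] [Algebra B S] [IsScalarTower A B S] [AddCommGroup N] [Module A N]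
    [Module B N] [IsScalarTower A B N] [Module.Flat B S] [Module.Flat A N] :
    Module.Flat A (S ⊗[B] N) := by
  rw [Module.Flat.iff_lTensor_preserves_injective_linearMap]
  intro X Y _ _ _ _ f hf
  have hassoc : (AlgebraTensorModule.assoc A B S S N Y).toLinearMap ∘ₗ
      AlgebraTensorModule.lTensor S (S ⊗[B] N) f =
      AlgebraTensorModule.lTensor S S (AlgebraTensorModule.lTensor B N f) ∘ₗ
        (AlgebraTensorModule.assoc A B S S N X).toLinearMap := by
    ext
    simp
  have hinj : Function.Injective (AlgebraTensorModule.lTensor S S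
      (AlgebraTensorModule.lTensor B N f)) :=
    Module.Flat.lTensor_preserves_injective_linearMap _
      (Module.Flat.lTensor_preserves_injective_linearMap f hf)
  refine Function.Injective.of_comp (f := AlgebraTensorModule.assoc A B S S N Y) ?_
  convert! hinj.comp (AlgebraTensorModule.assoc A B S S N X).injective using 1
  exact congrArg DFunLike.coe hassoc

/-- The equivalence `(R ⧸ I) ⊗[R] K ≃ K ⧸ I K`, linear over `R ⧸ I`. -/
def quotTensorEquivQuotSMulOverQuotient {R : Type*} [CommRing R] (I : Ideal R) (K : Type*)
    [AddCommGroup K] [Module R K] : (R ⧸ I) ⊗[R] K ≃ₗ[R ⧸ I] K ⧸ (I • ⊤ : Submodule R K) :=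
  (quotTensorEquivQuotSMul K I).extendScalarsOfSurjective Ideal.Quotient.mk_surjective

lemma ker_localRingHom_of_exists_div {B F : Type*} [CommRing B] [CommRing F] {f : B →+* F}
    (hf : ∀ x, ∃ r s, IsUnit (f s) ∧ f s * x = f r) (Q : Ideal B) [Q.IsPrime] (q : Ideal F)
    [q.IsPrime] (hQ : Q = q.comap f) :
    RingHom.ker (Localization.localRingHom Q q f hQ) =
      (RingHom.ker f).map (algebraMap B (Localization.AtPrime Q)) := by
  refine le_antisymm (fun x hx ↦ ?_) (Ideal.map_le_iff_le_comap.mpr fun b hb ↦ ?_)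
  · obtain ⟨b, c, rfl⟩ := IsLocalization.exists_mk'_eq Q.primeCompl x
    rw [RingHom.mem_ker, Localization.localRingHom_mk', IsLocalization.mk'_eq_zero_iff] at hx
    obtain ⟨d, hd⟩ := hx
    obtain ⟨r, s, hs, hsd⟩ := hf d
    have hr : r ∈ Q.primeCompl := by
      rw [Ideal.mem_primeCompl_iff, hQ, Ideal.mem_comap, ← hsd, Ideal.unit_mul_mem_iff_mem q hs]
      exact d.2
    rw [IsLocalization.mk'_mem_iff, IsLocalization.algebraMap_mem_map_algebraMap_iff Q.primeCompl]
    exact ⟨r, hr, by rw [RingHom.mem_ker, map_mul, ← hsd, mul_assoc, hd, mul_zero]⟩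
  · rw [Ideal.mem_comap, RingHom.mem_ker, Localization.localRingHom_to_map, RingHom.mem_ker.mp hb,
      map_zero]

end Localization

section FiberRing

variable {A B : Type u} [CommRing A] [CommRing B] [Algebra A B] (P : PrimeSpectrum A)

instance : Algebra B (fiberRing A B P) :=
  inferInstanceAs (Algebra B (Localization (fiberSubmonoid A B P) ⧸ fiberIdeal A B P))

lemma fiberIdeal_eq_map : fiberIdeal A B P =
    (P.asIdeal.map (algebraMap A B)).map (algebraMap B (Localization (fiberSubmonoid A B P))) := by
  rw [fiberIdeal, Ideal.map_map]

lemma exists_div_fiberRing (x : fiberRing A B P) : ∃ r s : B,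
    IsUnit (algebraMap B (fiberRing A B P) s) ∧
      algebraMap B (fiberRing A B P) s * x = algebraMap B (fiberRing A B P) r := by
  obtain ⟨x, rfl⟩ := Ideal.Quotient.mk_surjective x
  obtain ⟨⟨r, s⟩, h⟩ := IsLocalization.surj (fiberSubmonoid A B P) x
  refine ⟨r, s, (IsLocalization.map_units (Localization _) s).map (Ideal.Quotient.mk _), ?_⟩
  exact (mul_comm _ _).trans (congrArg (Ideal.Quotient.mk _) h)

lemma mem_ker_algebraMap_fiberRing_iff {b : B} :
    b ∈ RingHom.ker (algebraMap B (fiberRing A B P)) ↔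
      ∃ w ∈ fiberSubmonoid A B P, w * b ∈ P.asIdeal.map (algebraMap A B) := by
  rw [← IsLocalization.algebraMap_mem_map_algebraMap_iff _ (Localization (fiberSubmonoid A B P)),
    ← fiberIdeal_eq_map]
  exact Ideal.Quotient.eq_zero_iff_mem

variable (N : Type u) [AddCommGroup N] [Module B N]

/-- The fiber module `N_P / P N_P` is the base change of `N` to the fiber ring. -/
def tensorEquivFiberModule :
    fiberRing A B P ⊗[B] N ≃ₗ[fiberRing A B P] fiberModule A B P N :=
  let e : (Localization (fiberSubmonoid A B P) ⧸ fiberIdeal A B P) ⊗[B] N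
      ≃ₗ[Localization (fiberSubmonoid A B P) ⧸ fiberIdeal A B P] _ :=
    (AlgebraTensorModule.cancelBaseChange B (Localization (fiberSubmonoid A B P)) _ _ N).symm ≪≫ₗ
      AlgebraTensorModule.congr (.refl _ _)
        (LocalizedModule.equivTensorProduct (fiberSubmonoid A B P) N).symm ≪≫ₗ
      quotTensorEquivQuotSMulOverQuotient _ _
  e

variable {P} (Q : PrimeSpectrum B) [Q.asIdeal.LiesOver P.asIdeal]

lemma algebraMap_mem_primeCompl {w : B} (hw : w ∈ fiberSubmonoid A B P) :
    w ∈ Q.asIdeal.primeCompl := by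
  obtain ⟨a, ha, rfl⟩ := hw
  exact fun h ↦ ha ((Ideal.mem_of_liesOver Q.asIdeal P.asIdeal a).mpr h)

variable (P) in
lemma map_ker_algebraMap_fiberRing :
    (RingHom.ker (algebraMap B (fiberRing A B P))).map
      (algebraMap B (Localization.AtPrime Q.asIdeal)) =
    (P.asIdeal.map (algebraMap A B)).map (algebraMap B (Localization.AtPrime Q.asIdeal)) := by
  refine le_antisymm (Ideal.map_le_iff_le_comap.mpr fun b hb ↦ ?_) (Ideal.map_mono fun b hb ↦ ?_)
  · obtain ⟨w, hw, hwb⟩ := (mem_ker_algebraMap_fiberRing_iff P).mp hb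
    rw [Ideal.mem_comap, IsLocalization.algebraMap_mem_map_algebraMap_iff Q.asIdeal.primeCompl]
    exact ⟨w, algebraMap_mem_primeCompl Q hw, hwb⟩
  · exact (mem_ker_algebraMap_fiberRing_iff P).mpr ⟨1, one_mem _, by rwa [one_mul]⟩

variable (P) in
lemma exists_liesOver_fiberRing :
    ∃ q : PrimeSpectrum (fiberRing A B P), q.asIdeal.LiesOver Q.asIdeal := by
  let C := Localization (fiberSubmonoid A B P)
  let J := Q.asIdeal.map (algebraMap B C)
  have hdisj : Disjoint (fiberSubmonoid A B P : Set B) Q.asIdeal :=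
    Set.disjoint_left.mpr fun _ hw ↦ algebraMap_mem_primeCompl Q hw
  have hJ : J.IsPrime := IsLocalization.isPrime_of_isPrime_disjoint _ _ _ Q.2 hdisj
  have hle : fiberIdeal A B P ≤ J := by
    rw [fiberIdeal_eq_map]
    exact Ideal.map_mono (Ideal.map_le_iff_le_comap.mpr (Q.asIdeal.over_def P.asIdeal).le)
  refine ⟨⟨J.map (Ideal.Quotient.mk (fiberIdeal A B P)), Ideal.map_isPrime_of_surjective
    Ideal.Quotient.mk_surjective (by rwa [Ideal.mk_ker])⟩, ⟨?_⟩⟩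
  calc Q.asIdeal = J.comap (algebraMap B C) :=
        (IsLocalization.under_map_of_isPrime_disjoint _ C Q.2 hdisj).symm
    _ = ((J.map (Ideal.Quotient.mk (fiberIdeal A B P))).comap (Ideal.Quotient.mk _)).comap
          (algebraMap B C) := by rw [Ideal.comap_map_mk hle]

end FiberRing

section FiberModule

open IsLocalRing

attribute [local instance] Localization.AtPrime.algebraOfLiesOver

variable {A B : Type u} [CommRing A] [CommRing B] [Algebra A B] (P : PrimeSpectrum A)
  (Q : PrimeSpectrum B) [Q.asIdeal.LiesOver P.asIdeal] (q : PrimeSpectrum (fiberRing A B P))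
  [q.asIdeal.LiesOver Q.asIdeal]

local notation "A_P" => Localization.AtPrime (PrimeSpectrum.asIdeal P)
local notation "B_Q" => Localization.AtPrime (PrimeSpectrum.asIdeal Q)
local notation "F_q" => Localization.AtPrime (PrimeSpectrum.asIdeal q)

omit [Q.asIdeal.LiesOver P.asIdeal] in
lemma algebraMap_localization_fiberRing_surjective :
    Function.Surjective (algebraMap B_Q F_q) :=
  (RingHom.surjectiveOnStalks_of_exists_div (exists_div_fiberRing P)).localRingHom_surjective
    Q.asIdeal q.asIdeal (q.asIdeal.over_def Q.asIdeal)

lemma ker_algebraMap_localization_fiberRing :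
    RingHom.ker (algebraMap B_Q F_q) =
      (maximalIdeal A_P).map (algebraMap A_P B_Q) := by
  rw [← Localization.AtPrime.map_eq_maximalIdeal, Ideal.map_map, ← IsScalarTower.algebraMap_eq,
    IsScalarTower.algebraMap_eq A B, ← Ideal.map_map, ← map_ker_algebraMap_fiberRing P Q]
  exact ker_localRingHom_of_exists_div (exists_div_fiberRing P) Q.asIdeal q.asIdeal
    (q.asIdeal.over_def Q.asIdeal)

variable (N : Type u) [AddCommGroup N] [Module B N]

/-- The localization `(N_P / P N_P)_q` of the fiber module is a base change of `N_Q`. -/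
def tensorEquivLocalizedFiberModule :
    F_q ⊗[B_Q] (B_Q ⊗[B] N) ≃ₗ[F_q]
      LocalizedModule q.asIdeal.primeCompl (fiberModule A B P N) :=
  AlgebraTensorModule.cancelBaseChange B B_Q _ _ N ≪≫ₗ
    (AlgebraTensorModule.cancelBaseChange B (fiberRing A B P) _ _ N).symm ≪≫ₗ
    AlgebraTensorModule.congr (.refl _ _) (tensorEquivFiberModule P N) ≪≫ₗ
    (LocalizedModule.equivTensorProduct q.asIdeal.primeCompl (fiberModule A B P N)).symm

lemma heightAt_fiberModule [Module.Finite B N] :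
    heightAt (fiberRing A B P) (fiberModule A B P N) q =
      supportDim B_Q (ClosedFiber A_P B_Q (B_Q ⊗[B] N)) :=
  (Module.supportDim_eq_of_equiv (tensorEquivLocalizedFiberModule P Q q N)).symm.trans
    (supportDim_tensor_eq_of_surjective (algebraMap_localization_fiberRing_surjective P Q q)
      (ker_algebraMap_localization_fiberRing P Q q) _)

lemma depthAt_fiberModule : depthAt (fiberRing A B P) (fiberModule A B P N) q =
    localDepth B_Q (ClosedFiber A_P B_Q (B_Q ⊗[B] N)) :=
  (localDepth_congr (tensorEquivLocalizedFiberModule P Q q N)).symm.trans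
    (localDepth_tensor_eq_of_surjective (algebraMap_localization_fiberRing_surjective P Q q)
      (ker_algebraMap_localization_fiberRing P Q q) _)

lemma mem_support_fiberModule [Module.Finite B N] (hQ : Q ∈ Module.support B N) :
    q ∈ Module.support (fiberRing A B P) (fiberModule A B P N) := by
  have : Nontrivial (B_Q ⊗[B] N) :=
    have := Module.mem_support_iff.mp hQ
    (LocalizedModule.equivTensorProduct Q.asIdeal.primeCompl N).symm.toEquiv.nontrivial
  have := nontrivial_closedFiber A_P B_Q (B_Q ⊗[B] N)
  have := nontrivial_tensor_of_surjective (algebraMap_localization_fiberRing_surjective P Q q)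
    (ker_algebraMap_localization_fiberRing P Q q) (B_Q ⊗[B] N)
  exact Module.mem_support_iff.mpr
    (tensorEquivLocalizedFiberModule P Q q N).symm.toEquiv.nontrivial

end FiberModule

section TensorProduct

attribute [local instance] Localization.AtPrime.algebraOfLiesOver

variable {A B : Type u} [CommRing A] [CommRing B] [Algebra A B] {P : PrimeSpectrum A}
  {Q : PrimeSpectrum B} [Q.asIdeal.LiesOver P.asIdeal] {M : Type u} [AddCommGroup M] [Module A M]
  {N : Type u} [AddCommGroup N] [Module A N] [Module B N] [IsScalarTower A B N]

local notation "A_P" => Localization.AtPrime (PrimeSpectrum.asIdeal P)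
local notation "B_Q" => Localization.AtPrime (PrimeSpectrum.asIdeal Q)

variable (P Q M N) in
/-- The equivalence `N_Q ⊗ M_P ≃ (N ⊗ M)_Q`. -/
def tensorEquivLocalizedModuleTensor :
    (B_Q ⊗[B] N) ⊗[A_P] LocalizedModule P.asIdeal.primeCompl M ≃ₗ[B_Q]
      LocalizedModule Q.asIdeal.primeCompl (N ⊗[A] M) :=
  AlgebraTensorModule.congr (.refl _ _) (LocalizedModule.equivTensorProduct _ M) ≪≫ₗ
    tensorBaseChangeEquiv A B _ _ N M ≪≫ₗ (LocalizedModule.equivTensorProduct _ (N ⊗[A] M)).symm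

lemma nontrivial_of_mem_support_tensor (hQ : Q ∈ Module.support B (N ⊗[A] M)) :
    Nontrivial ((B_Q ⊗[B] N) ⊗[A_P] LocalizedModule P.asIdeal.primeCompl M) :=
  have := Module.mem_support_iff.mp hQ
  (tensorEquivLocalizedModuleTensor P Q M N).toEquiv.nontrivial

omit [Q.asIdeal.LiesOver P.asIdeal] in
lemma mem_support_left_of_mem_support_tensor (hQ : Q ∈ Module.support B (N ⊗[A] M)) :
    Q ∈ Module.support B N := by
  have := Module.mem_support_iff.mp hQ
  have : Nontrivial ((B_Q ⊗[B] N) ⊗[A] M) := (AlgebraTensorModule.assoc A B B_Q B_Q N M ≪≫ₗ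
    (LocalizedModule.equivTensorProduct _ (N ⊗[A] M)).symm).toEquiv.nontrivial
  refine Module.mem_support_iff.mpr ?_
  by_contra! h
  have := (LocalizedModule.equivTensorProduct Q.asIdeal.primeCompl N).symm.toEquiv.subsingleton
  exact not_subsingleton ((B_Q ⊗[B] N) ⊗[A] M) inferInstance

variable (P) in
lemma mem_support_right_of_mem_support_tensor (hQ : Q ∈ Module.support B (N ⊗[A] M)) :
    P ∈ Module.support A M := by
  have := nontrivial_of_mem_support_tensor (P := P) hQ
  refine Module.mem_support_iff.mpr ?_
  by_contra! h
  exact not_subsingleton ((B_Q ⊗[B] N) ⊗[A_P] LocalizedModule P.asIdeal.primeCompl M)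
    inferInstance

variable [IsNoetherianRing B] [Module.Finite A M] [Module.Finite B N]
  (q : PrimeSpectrum (fiberRing A B P)) [q.asIdeal.LiesOver Q.asIdeal]

variable (Q M N) in
lemma heightAt_tensor_le [IsNoetherianRing A] : heightAt B (N ⊗[A] M) Q ≤
    heightAt A M P + heightAt (fiberRing A B P) (fiberModule A B P N) q := by
  rw [heightAt_fiberModule P Q q N]
  exact (Module.supportDim_eq_of_equiv (tensorEquivLocalizedModuleTensor P Q M N)).ge.trans
    supportDim_tensor_le

lemma depthAt_add_depthAt_fiberModule_le [Module.Flat A N]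
    (hQ : Q ∈ Module.support B (N ⊗[A] M)) :
    depthAt A M P + depthAt (fiberRing A B P) (fiberModule A B P N) q ≤
      depthAt B (N ⊗[A] M) Q := by
  have := nontrivial_of_mem_support_tensor (P := P) hQ
  have : Module.Flat A_P (B_Q ⊗[B] N) := by
    rw [Module.flat_iff_of_isLocalization _ P.asIdeal.primeCompl]
    exact flat_baseChange_of_flat A B _ N
  rw [depthAt_fiberModule P Q q N]
  exact localDepth_add_localDepth_closedFiber_le_localDepth_tensor.trans_eq
    (localDepth_congr (tensorEquivLocalizedModuleTensor P Q M N))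

end TensorProduct

section CondC

lemma CondC.congr {R M M' : Type*} [CommRing R] [AddCommGroup M] [Module R M]
    [AddCommGroup M'] [Module R M'] {n : ℕ} (h : CondC R n M) (e : M ≃ₗ[R] M') :
    CondC R n M' := by
  intro P hP
  let e' : LocalizedModule P.asIdeal.primeCompl M ≃ₗ[Localization.AtPrime P.asIdeal]
      LocalizedModule P.asIdeal.primeCompl M' :=
    LocalizedModule.equivTensorProduct _ _ ≪≫ₗ AlgebraTensorModule.congr (.refl _ _) e ≪≫ₗ
      (LocalizedModule.equivTensorProduct _ _).symm
  have hheight : heightAt R M P = heightAt R M' P := Module.supportDim_eq_of_equiv e'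
  have hdepth : depthAt R M P = depthAt R M' P := localDepth_congr e'
  rw [← hheight, ← hdepth]
  exact h P (e.support_eq ▸ hP)

lemma heightAt_nonneg_of_mem_support {R M : Type*} [CommRing R] [AddCommGroup M] [Module R M]
    {P : PrimeSpectrum R} (hP : P ∈ Module.support R M) : 0 ≤ heightAt R M P :=
  have := Module.mem_support_iff.mp hP
  Order.krullDim_nonneg_iff.mpr (Module.nonempty_support_iff.mpr this).to_subtype

lemma min_add_le_min_add_min {α : Type*} [AddCommMonoid α] [LinearOrder α]
    [IsOrderedAddMonoid α] {a b c : α} (ha : 0 ≤ a) (hb : 0 ≤ b) (hc : 0 ≤ c) :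
    min a (b + c) ≤ min a b + min a c := by
  rcases le_total a b with hab | hba
  · rw [min_eq_left hab]
    exact (min_le_left _ _).trans (le_add_of_nonneg_right (le_min ha hc))
  rcases le_total a c with hac | hca
  · rw [min_eq_left hac]
    exact (min_le_left _ _).trans (le_add_of_nonneg_left (le_min ha hb))
  · rw [min_eq_right hba, min_eq_right hca]
    exact min_le_right _ _

lemma condC_tensor {A B : Type u} [CommRing A] [CommRing B] [IsNoetherianRing A]
    [IsNoetherianRing B] [Algebra A B] {n : ℕ} {M : Type u} [AddCommGroup M] [Module A M]
    [Module.Finite A M] {N : Type u} [AddCommGroup N] [Module A N] [Module B N]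
    [IsScalarTower A B N] [Module.Finite B N] [Module.Flat A N] (hM : CondC A n M)
    (hfib : ∀ P ∈ Module.support A M, SerreCondS (fiberRing A B P) n (fiberModule A B P N)) :
    CondC B n (N ⊗[A] M) := by
  intro Q hQ
  let P := Q.comap (algebraMap A B)
  have : Q.asIdeal.LiesOver P.asIdeal := ⟨rfl⟩
  obtain ⟨q, _⟩ := exists_liesOver_fiberRing P Q
  have hP := mem_support_right_of_mem_support_tensor P hQ
  have hq := mem_support_fiberModule P Q q N (mem_support_left_of_mem_support_tensor hQ)
  have hn : (0 : WithBot ℕ∞) ≤ n := by exact_mod_cast zero_le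
  have hdepth := WithBot.coe_le_coe.mpr (depthAt_add_depthAt_fiberModule_le q hQ)
  calc min (n : WithBot ℕ∞) (heightAt B (N ⊗[A] M) Q)
      ≤ min (n : WithBot ℕ∞)
          (heightAt A M P + heightAt (fiberRing A B P) (fiberModule A B P N) q) :=
        min_le_min_left _ (heightAt_tensor_le Q M N q)
    _ ≤ min (n : WithBot ℕ∞) (heightAt A M P) +
          min (n : WithBot ℕ∞) (heightAt (fiberRing A B P) (fiberModule A B P N) q) :=
        min_add_le_min_add_min hn (heightAt_nonneg_of_mem_support hP)
          (heightAt_nonneg_of_mem_support hq)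
    _ ≤ depthAt A M P + 1 + depthAt (fiberRing A B P) (fiberModule A B P N) q :=
        add_le_add (hM P hP) (hfib P hP q hq)
    _ = depthAt A M P + depthAt (fiberRing A B P) (fiberModule A B P N) q + 1 :=
        add_right_comm _ _ _
    _ ≤ depthAt B (N ⊗[A] M) Q + 1 := by gcongr; exact hdepth

/-- The isomorphism `N ⊗[A] M ≃ M ⊗[A] N`, linear over the algebra `B` acting on `N`. -/
def tensorRightComm (A B M N : Type u) [CommRing A] [CommRing B] [Algebra A B]
    [AddCommGroup M] [Module A M] [AddCommGroup N] [Module A N] [Module B N]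
    [IsScalarTower A B N] :
    letI := tensorRightModule A B M N
    N ⊗[A] M ≃ₗ[B] M ⊗[A] N :=
  letI := tensorRightModule A B M N
  { TensorProduct.comm A N M with
    map_smul' b x := by
      change TensorProduct.comm A N M (b • x) = (TensorProduct.comm A M N).symm
        (b • TensorProduct.comm A M N (TensorProduct.comm A N M x))
      simp }

end CondC

end

theorem tensor_condC_of_condC_base_serreS_fibers (A B : Type u) [CommRing A] [CommRing B] [IsNoetherianRing A] [IsNoetherianRing B]
    [Algebra A B] (n : ℕ)
    (M : Type u) [AddCommGroup M] [Module A M] [Module.Finite A M]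
    (N : Type u) [AddCommGroup N] [Module A N] [Module B N] [IsScalarTower A B N]
    [Module.Finite B N] [Module.Flat A N]
    (hM : CondC A n M)
    (hfib : ∀ P ∈ Module.support A M, SerreCondS (fiberRing A B P) n (fiberModule A B P N)) :
    CondC B n (M ⊗[A] N) :=
  (condC_tensor hM hfib).congr (tensorRightComm A B M N)

end
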